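/- Let X be a finite connected graph of genus g with an orientation, let G be a finite abelian group, let η : E(X) → G be a voltage assignment, and let ρ : G → ℂ* be a character. Let L_ρ = Q − A_ρ be the ρ-twisted Laplacian. Then det L_ρ = Σ_F ∏_{i=1}^{k} |1 − ρ(η(Xᵢ))|², where the sum is over all subsets F ⊆ E(X) with |F| = g − 1 such that every connected component of X∖F has genus one, X∖F = X₁ ⊔ ⋯ ⊔ X_k is the connected component decomposition, and η(Xᵢ) ∈ G is the oriented sum of the voltages along the unique cycle of Xᵢ. -/

import Mathlib

/-!
The proof factors the twisted Laplacian as `L_ρ = B Bᴴ`, where `B` is the `ρ`-twisted incidence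
matrix (`twistedLapl_eq_mul`), and expands the determinant by the Cauchy–Binet formula
(`det_mul_eq_sum_powersetCard`): `det L_ρ = ∑_S |det B_S|²` over the sets `S` of `|V(X)|` edges.
The complement `F` of `S` then has `g - 1` elements, and it remains to evaluate `|det B_S|²`.

A nonzero term of the Leibniz expansion of `det B_S` is a matching: an assignment to each vertex
of an incident edge of `S`, with distinct edges for distinct vertices. Such a matching exists if
and only if every component of `X ∖ F` has genus one. One direction is Hall's theorem
(`exists_isMatching`); conversely a matching restricts to a bijection between the vertices and
the edges of each component (`IsMatching.card_edgesIn`). So the minors of the other sets `S`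
vanish (`det_twistedInc_eq_zero`).

Given a matching `m`, sending each vertex to the other end of its edge is a map
`next m : V(X) → V(X)`. Up to phases of the columns, `B_S` is the matrix `1 - A` with `A` the
weighted adjacency matrix of this map, whose determinant is the product over the components of
`1 -` the product of the weights around the cycle of the component (`det_one_sub_functional`).
Any edge cycle of the component is this cycle, run through in one of the two directions
(`IsMatching.norm_one_sub_pathVoltage`), and reversing it only conjugates the value of the
character. Hence `|det B_S|² = ∏ |1 - ρ(η(Xᵢ))|²`.
-/

set_option autoImplicit false
set_option maxHeartbeats 1000000

/-- A graph in the sense of Serre: a finite set of vertices, a finite set of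
half-edges with a fixed-point-free involution, and a root map. -/
structure SerreGraph where
  V : Type
  H : Type
  fintypeV : Fintype V
  fintypeH : Fintype H
  decEqV : DecidableEq V
  decEqH : DecidableEq H
  inv : H → H
  inv_inv : ∀ h, inv (inv h) = h
  inv_ne : ∀ h, inv h ≠ h
  root : H → V

attribute [instance] SerreGraph.fintypeV SerreGraph.fintypeH SerreGraph.decEqV SerreGraph.decEqH

namespace SerreGraph

/-- Edges are orbits `{h, inv h}` of the involution. -/
def Edge (X : SerreGraph) : Type := Quot (fun h h' : X.H => h' = X.inv h)

/-- The edge underlying a half-edge. -/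
def edgeOf (X : SerreGraph) (h : X.H) : X.Edge := Quot.mk _ h

lemma edgeOf_surjective (X : SerreGraph) : Function.Surjective X.edgeOf :=
  fun e => Quot.exists_rep e

lemma edgeOf_inv (X : SerreGraph) (h : X.H) : X.edgeOf (X.inv h) = X.edgeOf h :=
  Quot.sound (X.inv_inv h).symm

instance (X : SerreGraph) : Finite X.Edge := Quot.finite _
noncomputable instance (X : SerreGraph) : Fintype X.Edge := Fintype.ofFinite _
noncomputable instance (X : SerreGraph) : DecidableEq X.Edge := Classical.decEq _

/-- One step of adjacency in the graph obtained by deleting the edges in `F`. -/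
def adjStep (X : SerreGraph) (F : Finset X.Edge) (u v : X.V) : Prop :=
  ∃ h : X.H, X.root h = u ∧ X.root (X.inv h) = v ∧ X.edgeOf h ∉ F

/-- `u` and `v` lie in the same connected component of `X ∖ F`. -/
def compRel (X : SerreGraph) (F : Finset X.Edge) (u v : X.V) : Prop :=
  Relation.ReflTransGen (X.adjStep F) u v

/-- A graph is connected if it is nonempty and any two vertices are joined by a path. -/
def Connected (X : SerreGraph) : Prop :=
  Nonempty X.V ∧ ∀ u v : X.V, X.compRel ∅ u v

/-- The vertex set of the connected component of `v` in `X ∖ F`. -/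
noncomputable def compVerts (X : SerreGraph) (F : Finset X.Edge) (v : X.V) : Finset X.V :=
  (Set.toFinite {u | X.compRel F v u}).toFinset

/-- The set of connected components (as vertex sets) of `X ∖ F`. -/
noncomputable def components (X : SerreGraph) (F : Finset X.Edge) : Finset (Finset X.V) :=
  Finset.univ.image (X.compVerts F)

/-- The edges of `X ∖ F` belonging to a component with vertex set `C`. -/
noncomputable def edgesIn (X : SerreGraph) (F : Finset X.Edge) (C : Finset X.V) :
    Finset X.Edge :=
  (Set.toFinite {e | e ∉ F ∧ ∃ h, X.edgeOf h = e ∧ X.root h ∈ C}).toFinset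

/-- A spanning tree: a spanning-connected set of edges of cardinality `|V| - 1`. -/
def IsSpanningTree (X : SerreGraph) (T : Finset X.Edge) : Prop :=
  (∀ u v : X.V, Relation.ReflTransGen
      (fun a b => ∃ h, X.root h = a ∧ X.root (X.inv h) = b ∧ X.edgeOf h ∈ T) u v) ∧
  T.card + 1 = Fintype.card X.V

noncomputable def spanningTrees (X : SerreGraph) : Finset (Finset X.Edge) :=
  (Set.toFinite {T | X.IsSpanningTree T}).toFinset

/-- The number of spanning trees of `X`; by Kirchhoff's theorem this is `|Jac(X)|`. -/
noncomputable def numSpanningTrees (X : SerreGraph) : ℕ := X.spanningTrees.card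

/-- The genus `g(X) = |E(X)| - |V(X)| + 1` of a (connected) graph. -/
noncomputable def genus (X : SerreGraph) : ℕ :=
  Fintype.card X.Edge + 1 - Fintype.card X.V

/-- The Jacobian polynomial `J_X = ∑_T ∏_{e ∉ T} x_e`, summed over spanning trees. -/
noncomputable def jacobianPoly (X : SerreGraph) (R : Type) [CommRing R] :
    MvPolynomial X.Edge R :=
  ∑ T ∈ X.spanningTrees, ∏ e ∈ Tᶜ, MvPolynomial.X e

/-- A closed path: a nonempty list of half-edges, consecutively matched head-to-tail,
including from the last one back to the first. -/
def IsClosedPath (X : SerreGraph) (l : List X.H) : Prop :=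
  l ≠ [] ∧ List.Chain' (fun a b => X.root (X.inv a) = X.root b) (l ++ l.take 1)

/-- A cycle with pairwise distinct edges, all belonging to `S`. -/
def IsEdgeCycle (X : SerreGraph) (S : Finset X.Edge) (l : List X.H) : Prop :=
  X.IsClosedPath l ∧ (∀ h ∈ l, X.edgeOf h ∈ S) ∧ (l.map X.edgeOf).Nodup

/-- An edge is a loop if its two root vertices coincide. -/
def IsLoop (X : SerreGraph) (e : X.Edge) : Prop :=
  ∃ h, X.edgeOf h = e ∧ X.root h = X.root (X.inv h)

/-- An orientation: a choice of half-edge (source half) for every edge. -/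
structure Orientation (X : SerreGraph) where
  pick : X.Edge → X.H
  pick_spec : ∀ e, X.edgeOf (pick e) = e

/-- The voltage of a half-edge: `η(e)` if it is traversed in the chosen orientation,
`η(e)⁻¹` otherwise. -/
def halfVoltage {G : Type} [Group G] (X : SerreGraph) (o : X.Orientation)
    (η : X.Edge → G) (h : X.H) : G :=
  if h = o.pick (X.edgeOf h) then η (X.edgeOf h) else (η (X.edgeOf h))⁻¹

/-- The (Frobenius) voltage of a path of half-edges. -/
def pathVoltage {G : Type} [Group G] (X : SerreGraph) (o : X.Orientation)
    (η : X.Edge → G) (l : List X.H) : G :=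
  (l.map (X.halfVoltage o η)).prod

/-- A morphism of Serre graphs. -/
structure Hom (X Y : SerreGraph) where
  vMap : X.V → Y.V
  hMap : X.H → Y.H
  hMap_inv : ∀ h, hMap (X.inv h) = Y.inv (hMap h)
  root_hMap : ∀ h, Y.root (hMap h) = vMap (X.root h)

/-- The induced map on edges. -/
def Hom.edgeMap {X Y : SerreGraph} (f : Hom X Y) : X.Edge → Y.Edge :=
  Quot.map f.hMap (fun a b hab => by rw [hab, f.hMap_inv])

/-- A morphism is harmonic with local degree function `d` if for every vertex `v`
upstairs and every half-edge `h` rooted at its image, `d v` is the number of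
half-edges at `v` mapping to `h`. -/
structure IsHarmonic {X Y : SerreGraph} (f : Hom X Y) (d : X.V → ℕ) : Prop where
  pos : ∀ v, 0 < d v
  balanced : ∀ (v : X.V) (h : Y.H), Y.root h = f.vMap v →
    d v = Nat.card {h' : X.H // X.root h' = v ∧ f.hMap h' = h}

/-- A harmonic Galois cover with Galois group `G`: a harmonic morphism of degree `|G|`
together with an equivariant `G`-action that is transitive on vertex fibers and simply
transitive on edge fibers. -/
structure GCover (G : Type) [Group G] [Fintype G] (Xt X : SerreGraph)
    extends Hom Xt X where
  d : Xt.V → ℕ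
  harm : IsHarmonic toHom d
  deg_eq : ∀ v : X.V,
    ∑ w ∈ Finset.univ.filter (fun w => toHom.vMap w = v), d w = Fintype.card G
  smulV : G → Xt.V → Xt.V
  smulH : G → Xt.H → Xt.H
  one_smulV : ∀ w, smulV 1 w = w
  mul_smulV : ∀ g g' w, smulV (g * g') w = smulV g (smulV g' w)
  one_smulH : ∀ h, smulH 1 h = h
  mul_smulH : ∀ g g' h, smulH (g * g') h = smulH g (smulH g' h)
  smulH_inv : ∀ g h, smulH g (Xt.inv h) = Xt.inv (smulH g h)
  root_smulH : ∀ g h, Xt.root (smulH g h) = smulV g (Xt.root h)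
  vMap_smulV : ∀ g w, toHom.vMap (smulV g w) = toHom.vMap w
  hMap_smulH : ∀ g h, toHom.hMap (smulH g h) = toHom.hMap h
  d_smulV : ∀ g w, d (smulV g w) = d w
  vertex_trans : ∀ w w' : Xt.V, toHom.vMap w = toHom.vMap w' → ∃ g, smulV g w = w'
  edge_trans : ∀ ht ht' : Xt.H,
    (toHom.hMap ht' = toHom.hMap ht ∨ toHom.hMap ht' = X.inv (toHom.hMap ht)) →
    ∃ g, smulH g ht = ht' ∨ smulH g ht = Xt.inv ht'
  edge_free : ∀ (g : G) (ht : Xt.H),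
    (smulH g ht = ht ∨ smulH g ht = Xt.inv ht) → g = 1

namespace GCover

variable {G : Type} [Group G] [Fintype G] {Xt X : SerreGraph}

/-- The cover is free if all local degrees are one. -/
def IsFree (c : GCover G Xt X) : Prop := ∀ w, c.d w = 1

/-- The dilation subgroup of a vertex: the common stabilizer of the vertices in its fiber. -/
def dilation (c : GCover G Xt X) (v : X.V) : Set G :=
  {g | ∀ w : Xt.V, c.vMap w = v → c.smulV g w = w}

/-- One step of adjacency upstairs, through half-edges lying over `X ∖ F`. -/
def liftStep (c : GCover G Xt X) (F : Finset X.Edge) (a b : Xt.V) : Prop :=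
  ∃ ht : Xt.H, Xt.root ht = a ∧ Xt.root (Xt.inv ht) = b ∧ X.edgeOf (c.hMap ht) ∉ F

/-- The number of connected components of the preimage of the component of `v` in `X ∖ F`. -/
noncomputable def numLiftComponents (c : GCover G Xt X) (F : Finset X.Edge) (v : X.V) : ℕ :=
  Nat.card (Quot (fun a b : {w : Xt.V // X.compRel F v (c.vMap w)} => c.liftStep F a.1 b.1))

/-- The connected component of `v` in `X ∖ F` is `G`-nontrivial, i.e. the restriction of the
cover over it is not isomorphic to the trivial `G`-cover (equivalently, its preimage does
not have exactly `|G|` connected components). -/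
def GNontrivialAt (c : GCover G Xt X) (F : Finset X.Edge) (v : X.V) : Prop :=
  c.numLiftComponents F v ≠ Fintype.card G

/-- Independent sets of the matroid `M*(X̃/X)`. -/
def Indep (c : GCover G Xt X) (F : Finset X.Edge) : Prop :=
  ∀ v : X.V, c.GNontrivialAt F v

/-- Bases of the matroid `M*(X̃/X)`: maximal independent sets. -/
def IsBasisD (c : GCover G Xt X) (F : Finset X.Edge) : Prop :=
  c.Indep F ∧ ∀ F' : Finset X.Edge, F ⊆ F' → c.Indep F' → F' = F

/-- The dilated `G`-voltage assignment `η` (together with a section `σ` of the vertex map)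
represents the cover: for each edge `e`, some lift of `e` runs from `σ(s(e))` to
`η(e) • σ(t(e))`. -/
structure IsVoltageRep (c : GCover G Xt X) (o : X.Orientation) (σ : X.V → Xt.V)
    (η : X.Edge → G) : Prop where
  sec : ∀ v, c.vMap (σ v) = v
  lift : ∀ e : X.Edge, ∃ ht : Xt.H, c.hMap ht = o.pick e ∧
    Xt.root ht = σ (X.root (o.pick e)) ∧
    Xt.root (Xt.inv ht) = c.smulV (η e) (σ (X.root (X.inv (o.pick e))))

/-- The component of `v` in `X ∖ F` is nontrivial for the cover twisted by the character
`ρ`: it contains a vertex whose dilation group has nontrivial image under `ρ`, or a closed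
path whose voltage has nontrivial image under `ρ`. -/
def RhoNontrivialAt (c : GCover G Xt X) (o : X.Orientation) (η : X.Edge → G)
    (ρ : G →* ℂ) (F : Finset X.Edge) (v : X.V) : Prop :=
  (∃ u : X.V, X.compRel F v u ∧ ∃ g ∈ c.dilation u, ρ g ≠ 1) ∨
  (∃ l : List X.H, X.IsClosedPath l ∧
    (∀ h ∈ l, X.edgeOf h ∉ F ∧ X.compRel F v (X.root h)) ∧
    ρ (X.pathVoltage o η l) ≠ 1)

/-- Bases of the `ρ`-twisted matroid `M*(X̃/X, ρ)`: maximal subsets `F` such that every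
connected component of `X ∖ F` is `ρ`-nontrivial. -/
def IsBasisRho (c : GCover G Xt X) (o : X.Orientation) (η : X.Edge → G)
    (ρ : G →* ℂ) (F : Finset X.Edge) : Prop :=
  (∀ v : X.V, c.RhoNontrivialAt o η ρ F v) ∧
  ∀ F' : Finset X.Edge, F ⊆ F' → (∀ v : X.V, c.RhoNontrivialAt o η ρ F' v) → F' = F

end GCover

/-- The weight of a connected component with edge set `S`: `|1 - ρ(η(C))|²` where `η(C)` is
the voltage of its unique cycle, if it has one, and `1` otherwise (tree components). -/
noncomputable def cycleWeight {G : Type} [Group G] (X : SerreGraph) (o : X.Orientation)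
    (η : X.Edge → G) (ρ : G →* ℂ) (S : Finset X.Edge) : ℝ := by
  classical exact
  if hc : ∃ l, X.IsEdgeCycle S l then
    ‖(1 : ℂ) - ρ (X.pathVoltage o η hc.choose)‖ ^ 2
  else 1

/-- The weight `w_ρ(F)`: the product of the weights of the connected components of `X ∖ F`. -/
noncomputable def basisWeight {G : Type} [Group G] (X : SerreGraph) (o : X.Orientation)
    (η : X.Edge → G) (ρ : G →* ℂ) (F : Finset X.Edge) : ℝ :=
  ∏ C ∈ X.components F, cycleWeight X o η ρ (X.edgesIn F C)

/-- The weight `w(M*(X̃/X, ρ))` of the `ρ`-twisted matroid: the sum of the weights of its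
bases. -/
noncomputable def GCover.twistedWeight {G : Type} [Group G] [Fintype G] {Xt X : SerreGraph}
    (c : GCover G Xt X) (o : X.Orientation) (η : X.Edge → G) (ρ : G →* ℂ) : ℝ :=
  ∑ F ∈ (Set.toFinite {F : Finset X.Edge | c.IsBasisRho o η ρ F}).toFinset,
    basisWeight X o η ρ F

/-- The weight polynomial `P_{X̃/X,ρ} = ∑_F w_ρ(F) ∏_{e ∈ F} x_e` of the `ρ`-twisted
matroid, summed over its bases. -/
noncomputable def GCover.twistedWeightPoly {G : Type} [Group G] [Fintype G]
    {Xt X : SerreGraph} (c : GCover G Xt X) (o : X.Orientation) (η : X.Edge → G)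
    (ρ : G →* ℂ) : MvPolynomial X.Edge ℝ :=
  ∑ F ∈ (Set.toFinite {F : Finset X.Edge | c.IsBasisRho o η ρ F}).toFinset,
    MvPolynomial.C (basisWeight X o η ρ F) * ∏ e ∈ F, MvPolynomial.X e

end SerreGraph
namespace SerreGraph

/-- One contraction step: `a` and `b` are joined by an edge belonging to `F`. -/
def contractStep (X : SerreGraph) (F : Finset X.Edge) (a b : X.V) : Prop :=
  ∃ h, X.edgeOf h ∈ F ∧ X.root h = a ∧ X.root (X.inv h) = b

/-- Data exhibiting `Xc` as the contraction of `X` along the edge set `F`: the vertices of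
`Xc` are the connected components of the subgraph spanned by `F`, and the half-edges of `Xc`
are the half-edges of `X` not lying on `F`. -/
structure ContractionData (X Xc : SerreGraph) (F : Finset X.Edge) where
  vMap : X.V → Xc.V
  hMap : (h : X.H) → X.edgeOf h ∉ F → Xc.H
  hMap_injective : ∀ h₁ hh₁ h₂ hh₂, hMap h₁ hh₁ = hMap h₂ hh₂ → h₁ = h₂
  hMap_surjective : ∀ k : Xc.H, ∃ h hh, hMap h hh = k
  hMap_inv : ∀ h hh hh', hMap (X.inv h) hh' = Xc.inv (hMap h hh)
  root_hMap : ∀ h hh, Xc.root (hMap h hh) = vMap (X.root h)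
  vMap_surjective : Function.Surjective vMap
  vMap_eq_iff : ∀ u v, vMap u = vMap v ↔ Relation.ReflTransGen (X.contractStep F) u v

/-- The valency of a vertex (loops counted twice). -/
noncomputable def valency (X : SerreGraph) (v : X.V) : ℕ :=
  Nat.card {h : X.H // X.root h = v}

/-- The Laplacian matrix `L = Q - A` of a graph. -/
noncomputable def lapl (X : SerreGraph) : Matrix X.V X.V ℤ :=
  Matrix.of fun u v =>
    (if u = v then (X.valency u : ℤ) else 0) -
      (Nat.card {h : X.H // X.root h = u ∧ X.root (X.inv h) = v} : ℤ)

/-- The Laplacian as a homomorphism on divisors. -/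
noncomputable def laplHom (X : SerreGraph) : (X.V → ℤ) →+ (X.V → ℤ) where
  toFun := fun D u => ∑ v, X.lapl u v * D v
  map_zero' := by funext u; simp
  map_add' := by
    intro a b; funext u
    simp [mul_add, Finset.sum_add_distrib]

/-- Divisors of total degree zero. -/
noncomputable def div0 (X : SerreGraph) : AddSubgroup (X.V → ℤ) where
  carrier := {D | ∑ v, D v = 0}
  add_mem' := by
    intro a b ha hb
    simp only [Set.mem_setOf_eq, Pi.add_apply] at *
    simp [Finset.sum_add_distrib, ha, hb]
  zero_mem' := by simp
  neg_mem' := by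
    intro a ha
    simp only [Set.mem_setOf_eq, Pi.neg_apply] at *
    simp [ha]

/-- The subgroup of principal divisors: the image of the Laplacian. -/
noncomputable def principal (X : SerreGraph) : AddSubgroup (X.V → ℤ) :=
  (laplHom X).range

/-- The Jacobian (critical) group `Jac(X) = Div₀(X) / Im L`. -/
noncomputable def jac (X : SerreGraph) : Type :=
  X.div0 ⧸ ((X.principal).addSubgroupOf X.div0)

noncomputable instance (X : SerreGraph) : AddCommGroup X.jac :=
  inferInstanceAs (AddCommGroup (X.div0 ⧸ ((X.principal).addSubgroupOf X.div0)))

/-- The pushforward of divisors along a graph morphism. -/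
noncomputable def pushforward {Xt X : SerreGraph} (f : Hom Xt X) (D : Xt.V → ℤ) :
    X.V → ℤ :=
  fun v => ∑ w ∈ Finset.univ.filter (fun w => f.vMap w = v), D w

/-- The diagonal valency matrix `Q` (over `ℂ`). -/
noncomputable def qMatrix (X : SerreGraph) : Matrix X.V X.V ℂ :=
  Matrix.of fun u v => if u = v then (X.valency u : ℂ) else 0

/-- The `ρ`-twisted adjacency matrix `A_ρ`. -/
noncomputable def twistedAdj {G : Type} [Group G] (X : SerreGraph) (o : X.Orientation)
    (η : X.Edge → G) (ρ : G →* ℂ) : Matrix X.V X.V ℂ :=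
  Matrix.of fun u v =>
    (∑ e ∈ Finset.univ.filter
        (fun e => X.root (o.pick e) = u ∧ X.root (X.inv (o.pick e)) = v), ρ (η e)) +
    (∑ e ∈ Finset.univ.filter
        (fun e => X.root (o.pick e) = v ∧ X.root (X.inv (o.pick e)) = u),
          (starRingEnd ℂ) (ρ (η e)))

/-- The `ρ`-twisted Laplacian `L_ρ = Q - A_ρ`. -/
noncomputable def twistedLapl {G : Type} [Group G] (X : SerreGraph) (o : X.Orientation)
    (η : X.Edge → G) (ρ : G →* ℂ) : Matrix X.V X.V ℂ :=
  X.qMatrix - X.twistedAdj o η ρ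

/-- The reciprocal `ζ_M(s, x_e, X)⁻¹ = det(I - W)` of the metric zeta function, where `W`
is the edge matrix with entries `s^{x_e}` (two-term determinant formula). -/
noncomputable def zetaMInv (X : SerreGraph) (x : X.Edge → ℝ) (s : ℝ) : ℝ :=
  Matrix.det ((1 : Matrix X.H X.H ℝ) - Matrix.of fun a b : X.H =>
    if X.root (X.inv a) = X.root b ∧ b ≠ X.inv a then s ^ (x (X.edgeOf a)) else 0)

/-- The reciprocal of the Ihara zeta function: the metric zeta with all lengths one. -/
noncomputable def zetaInv (X : SerreGraph) (s : ℝ) : ℝ :=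
  X.zetaMInv (fun _ => 1) s

/-- The reciprocal `L_M(s, x_e, X̃/X, ρ)⁻¹ = det(I - W_ρ)` of the metric Artin `L`-function
of the cover defined by the voltage assignment `η` (two-term determinant formula). -/
noncomputable def LMInv {G : Type} [Group G] (X : SerreGraph) (o : X.Orientation)
    (η : X.Edge → G) (ρ : G →* ℂ) (x : X.Edge → ℝ) (s : ℝ) : ℂ :=
  Matrix.det ((1 : Matrix X.H X.H ℂ) - Matrix.of fun a b : X.H =>
    if X.root (X.inv a) = X.root b ∧ b ≠ X.inv a then
      ρ (X.halfVoltage o η a) * ((s ^ (x (X.edgeOf a)) : ℝ) : ℂ)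
    else 0)

/-- The weight polynomial of a free cover defined by the voltage assignment `η`, twisted by
`ρ`: the sum over all `(g-1)`-element edge sets `F` all of whose complementary components
have genus one of `∏ᵢ |1 - ρ(η(Xᵢ))|² ∏_{e ∈ F} x_e`. -/
noncomputable def freeWeightPoly {G : Type} [Group G] (X : SerreGraph)
    (o : X.Orientation) (η : X.Edge → G) (ρ : G →* ℂ) : MvPolynomial X.Edge ℝ :=
  ∑ F ∈ (Set.toFinite {F : Finset X.Edge |
      F.card + Fintype.card X.V = Fintype.card X.Edge ∧
      ∀ C ∈ X.components F, (X.edgesIn F C).card = C.card}).toFinset,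
    MvPolynomial.C (basisWeight X o η ρ F) * ∏ e ∈ F, MvPolynomial.X e

/-- The `j`-th vertex on the chain subdividing the edge `e` into `n e` parts. -/
noncomputable def subVertex (X : SerreGraph) (o : X.Orientation) (n : X.Edge → ℕ)
    (e : X.Edge) (j : ℕ) : X.V ⊕ ((e : X.Edge) × Fin (n e - 1)) :=
  if _h0 : j = 0 then Sum.inl (X.root (o.pick e))
  else if h : j < n e then Sum.inr ⟨e, ⟨j - 1, by omega⟩⟩
  else Sum.inl (X.root (X.inv (o.pick e)))

/-- The graph obtained from `X` by replacing each edge `e` by a chain of `n e` edges. -/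
noncomputable def subdivide (X : SerreGraph) (o : X.Orientation) (n : X.Edge → ℕ) :
    SerreGraph where
  V := X.V ⊕ ((e : X.Edge) × Fin (n e - 1))
  H := (e : X.Edge) × (Fin (n e) × Bool)
  fintypeV := inferInstance
  fintypeH := inferInstance
  decEqV := Classical.decEq _
  decEqH := Classical.decEq _
  inv := fun p => ⟨p.1, (p.2.1, !p.2.2)⟩
  inv_inv := by rintro ⟨e, i, b⟩; simp
  inv_ne := by rintro ⟨e, i, b⟩ hcon; simp at hcon
  root := fun p => X.subVertex o n p.1 (if p.2.2 then (p.2.1 : ℕ) + 1 else (p.2.1 : ℕ))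

end SerreGraph

/-- The cycle graph with `k` vertices, every pair of cyclically adjacent vertices joined by
`M` parallel edges. -/
def cycleGraph (k M : ℕ) : SerreGraph where
  V := Fin k
  H := Fin k × Fin M × Bool
  fintypeV := inferInstance
  fintypeH := inferInstance
  decEqV := inferInstance
  decEqH := inferInstance
  inv := fun p => (p.1, p.2.1, !p.2.2)
  inv_inv := by rintro ⟨i, j, b⟩; simp
  inv_ne := by rintro ⟨i, j, b⟩ hcon; simp at hcon
  root := fun p => if p.2.2 then finRotate k p.1 else p.1

namespace SerreGraph

/-! ### Cauchy–Binet and determinants of functional graphs -/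

/-- A matrix that is triangular with respect to a rank function `b`, up to diagonal blocks that
are themselves diagonal, has determinant the product of its diagonal entries: a non-identity
permutation `σ` contributes zero, because the moved index of largest rank is `σ k` for some
`k ≠ σ k` of at most that rank. -/
theorem det_eq_prod_diag_of_rank {n R : Type*} [Fintype n] [DecidableEq n] [CommRing R]
    (b : n → ℕ) (M : Matrix n n R) (h : ∀ i j, i ≠ j → b j ≤ b i → M i j = 0) :
    M.det = ∏ i, M i i := by
  rw [Matrix.det_apply', Finset.sum_eq_single 1]
  · simp
  · intro σ _ hσ
    have hne : (Finset.univ.filter (fun j => σ j ≠ j)).Nonempty := by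
      by_contra hcon
      rw [Finset.not_nonempty_iff_eq_empty, Finset.filter_eq_empty_iff] at hcon
      exact hσ (Equiv.ext fun j => by simpa using hcon (Finset.mem_univ j))
    obtain ⟨j, hj, hmax⟩ := Finset.exists_max_image _ b hne
    rw [Finset.mem_filter] at hj
    obtain ⟨k, rfl⟩ := σ.surjective j
    have hk : σ k ≠ k := fun hh => hj.2 (congrArg σ hh)
    refine mul_eq_zero_of_right _ (Finset.prod_eq_zero (Finset.mem_univ k) ?_)
    exact h _ _ hk (hmax _ (by simpa using hk))
  · simp

/-- The **Cauchy–Binet formula**. The maximal minors are indexed by subsets of the right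
size, each enumerated by the index type `m` through a chosen map `g S`; the product of the two
minors does not depend on that choice. -/
theorem det_mul_eq_sum_powersetCard {m n R : Type*} [Fintype m] [DecidableEq m] [Fintype n]
    [DecidableEq n] [CommRing R] (A : Matrix m n R) (C : Matrix n m R)
    (g : Finset n → m → n)
    (hg : ∀ S : Finset n, S.card = Fintype.card m →
      Function.Injective (g S) ∧ Finset.univ.image (g S) = S) :
    (A * C).det = ∑ S ∈ Finset.univ.powersetCard (Fintype.card m),
      (A.submatrix id (g S)).det * (C.submatrix (g S) id).det := by
  have hexp : (A * C).det =
      ∑ p : m → n, (A.submatrix id p).det * ∏ i, C (p i) i := by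
    simp only [Matrix.det_apply', Matrix.mul_apply, Finset.prod_univ_sum, Finset.mul_sum,
      Fintype.piFinset_univ, Finset.sum_mul]
    rw [Finset.sum_comm]
    simp only [Finset.prod_mul_distrib, Matrix.submatrix_apply, id, mul_assoc]
  have hinj : (A * C).det = ∑ p : m → n with Function.Injective p,
      (A.submatrix id p).det * ∏ i, C (p i) i := by
    rw [hexp]
    refine (Finset.sum_subset (Finset.filter_subset _ _) fun p _ hp => ?_).symm
    have hp' : ¬ Function.Injective p := by simpa using hp
    simp only [Function.Injective, not_forall] at hp'
    obtain ⟨i, j, hij, hne⟩ := hp'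
    rw [Matrix.det_zero_of_column_eq hne (fun k => by simp [hij]), zero_mul]
  rw [hinj, ← Finset.sum_fiberwise_of_maps_to
    (g := fun p : m → n => Finset.univ.image p)
    (t := Finset.univ.powersetCard (Fintype.card m))]
  · refine Finset.sum_congr rfl fun S hS => ?_
    have hS' := (Finset.mem_powersetCard.1 hS).2
    obtain ⟨gi, gim⟩ := hg S hS'
    rw [Matrix.det_apply' (C.submatrix _ _), Finset.mul_sum]
    symm
    refine Finset.sum_bij (fun τ _ => g S ∘ τ) ?_ ?_ ?_ ?_
    · intro τ _
      simp only [Finset.mem_filter, Finset.mem_univ, true_and]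
      refine ⟨gi.comp τ.injective, ?_⟩
      conv_rhs => rw [← gim]
      ext x
      simp only [Finset.mem_image, Finset.mem_univ, true_and, Function.comp]
      exact ⟨fun ⟨a, h⟩ => ⟨τ a, h⟩, fun ⟨a, h⟩ => ⟨τ.symm a, by simpa using h⟩⟩
    · intro τ _ τ' _ h
      ext i
      exact gi (congrFun h i)
    · intro p hp
      simp only [Finset.mem_filter, Finset.mem_univ, true_and] at hp
      have hex : ∀ i, ∃ j, g S j = p i := fun i => by
        have : p i ∈ Finset.univ.image (g S) := by
          rw [gim, ← hp.2]; exact Finset.mem_image_of_mem _ (Finset.mem_univ _)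
        simpa using this
      choose t ht using hex
      have tinj : Function.Injective t := fun i j hij => hp.1 (by rw [← ht, ← ht, hij])
      exact ⟨Equiv.ofBijective t (Finite.injective_iff_bijective.1 tinj), Finset.mem_univ _,
        funext fun i => ht i⟩
    · intro τ _
      have : A.submatrix id (g S ∘ τ) = (A.submatrix id (g S)).submatrix id τ := rfl
      rw [this, Matrix.det_permute']
      simp only [Matrix.submatrix_apply, id, Function.comp]
      ring
  · intro p hp
    simp only [Finset.mem_filter, Finset.mem_univ, true_and] at hp
    simp [Finset.mem_powersetCard, Finset.card_image_of_injective _ hp]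

/-- The product of `u` along the cycle of `f` through `v`. It is an empty product, equal to
`1`, when `v` is not periodic, since `Function.minimalPeriod` is then `0`. -/
noncomputable def orbitProd {V : Type*} (f : V → V) (u : V → ℂ) (v : V) : ℂ :=
  ∏ i ∈ Finset.range (Function.minimalPeriod f v), u (f^[i] v)

/-- The determinant of `1 - A`, where `A` is the adjacency matrix of the functional graph
`v ↦ f v` with weights `u`: every weakly connected component, represented by a point `r` of
its unique cycle, contributes `1 - ∏ u` over that cycle. The map `rt` sends each vertex to the
representative of its component. -/
theorem det_one_sub_functional {V : Type*} [Fintype V] [DecidableEq V] (f : V → V) (u : V → ℂ)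
    (rt : V → V) (h1 : ∀ v, ∃ k, f^[k] v = rt v) (h2 : ∀ v, rt (f v) = rt v) :
    (Matrix.of fun i j : V =>
      (if i = j then (1 : ℂ) else 0) - (if f j = i then u j else 0)).det =
    ∏ r with rt r = r, (1 - orbitProd f u r) := by
  classical
  set M : Matrix V V ℂ := Matrix.of fun i j : V =>
      (if i = j then (1 : ℂ) else 0) - (if f j = i then u j else 0) with hM
  have hrt : ∀ v, rt (rt v) = rt v := by
    have : ∀ k v, rt (f^[k] v) = rt v := by
      intro k
      induction k with
      | zero => intro v; rfl
      | succ k ih => intro v; rw [Function.iterate_succ_apply, ih, h2]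
    intro v
    obtain ⟨k, hk⟩ := h1 v
    conv_lhs => rw [← hk]
    exact this k v
  -- `d v` is the number of steps from `v` to the representative of its component.
  let d : V → ℕ := fun v => Nat.find (h1 v)
  have d0 : ∀ v, rt v = v → d v = 0 := fun v hv => by
    simp only [d, Nat.find_eq_zero]; exact hv.symm
  have dpos : ∀ v, rt v ≠ v → d v = d (f v) + 1 := by
    intro v hv
    have hspec : f^[d v] v = rt v := Nat.find_spec (h1 v)
    have hspec' : f^[d (f v)] (f v) = rt (f v) := Nat.find_spec (h1 (f v))
    have hpos : d v ≠ 0 := fun h0 => hv (by rw [h0] at hspec; exact hspec.symm)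
    obtain ⟨k, hk⟩ := Nat.exists_eq_succ_of_ne_zero hpos
    apply le_antisymm
    · apply Nat.find_min'
      rw [Function.iterate_succ_apply, hspec', h2]
    · rw [hk]
      apply Nat.succ_le_succ
      apply Nat.find_min'
      rw [hk, Function.iterate_succ_apply] at hspec
      rw [hspec, h2]
  have dper : ∀ v, rt v = v → Function.minimalPeriod f v = d (f v) + 1 := by
    intro v hv
    have hspec' : f^[d (f v)] (f v) = rt (f v) := Nat.find_spec (h1 (f v))
    rw [h2, hv] at hspec'
    have hper : Function.IsPeriodicPt f (d (f v) + 1) v := hspec'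
    apply le_antisymm
    · exact hper.minimalPeriod_le (Nat.succ_pos _)
    · have hpos := hper.minimalPeriod_pos (Nat.succ_pos _)
      obtain ⟨k, hk⟩ := Nat.exists_eq_succ_of_ne_zero hpos.ne'
      rw [hk]
      apply Nat.succ_le_succ
      apply Nat.find_min'
      have := Function.iterate_minimalPeriod (f := f) (x := v)
      rw [hk, Function.iterate_succ_apply] at this
      rw [this, h2, hv]
  -- `y v` is the weight of the path from `v` to its representative. The row operations in `T`
  -- add `y j` times each row `j` of a component to the row of its representative, which clears
  -- that row off the diagonal.
  let y : V → ℂ := fun v => ∏ i ∈ Finset.range (d v), u (f^[i] v)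
  have huy : ∀ v, u v * y (f v) = ∏ i ∈ Finset.range (d (f v) + 1), u (f^[i] v) := by
    intro v
    rw [Finset.prod_range_succ', mul_comm]
    rfl
  have y0 : ∀ v, rt v = v → y v = 1 := fun v hv => by simp [y, d0 v hv]
  let T : Matrix V V ℂ := Matrix.of fun i j =>
    if rt i = i then (if rt j = i then y j else 0) else (if i = j then 1 else 0)
  have hTM : ∀ i j, (T * M) i j = T i j - T i (f j) * u j := by
    intro i j
    simp [Matrix.mul_apply, hM, mul_sub, Finset.sum_sub_distrib]
  have hT : T.det = 1 := by
    rw [det_eq_prod_diag_of_rank (fun v => if rt v = v then 0 else 1)]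
    · refine Finset.prod_eq_one fun i _ => ?_
      by_cases hi : rt i = i <;> simp [T, hi, y0]
    · intro i j hij hb
      by_cases hi : rt i = i
      · have hj : rt j = j := by
          by_contra hj
          simp [hi, hj] at hb
        simp [T, hi, hj, Ne.symm hij]
      · simp [T, hi, hij]
  have hroot : ∀ i j, rt i = i → (T * M) i j = if i = j then 1 - orbitProd f u i else 0 := by
    intro i j hi
    rw [hTM]
    by_cases hj : rt j = i
    · by_cases hjj : rt j = j
      · have hij : i = j := hj.symm.trans hjj
        subst hij
        simp only [T, Matrix.of_apply, hi, h2, if_true, y0]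
        rw [mul_comm, huy, orbitProd, dper _ hi]
      · have hij : i ≠ j := fun hh => hjj (hj.trans hh)
        simp only [T, Matrix.of_apply, hi, hj, h2, if_true, hij, if_false]
        rw [mul_comm, huy, ← dpos j hjj, sub_self]
    · have hij : i ≠ j := fun hh => hj (by rw [← hh, hi])
      simp [T, hi, hj, h2, hij]
  -- What remains is a forest pointing towards the representatives, so `T * M` is triangular
  -- with respect to `d`, once the representatives are given the largest rank.
  have hdet : (T * M).det = ∏ r with rt r = r, (1 - orbitProd f u r) := by
    rw [det_eq_prod_diag_of_rank
      (fun v => if rt v = v then (Finset.univ.sup d) + 1 else d v), Finset.prod_filter]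
    · refine Finset.prod_congr rfl fun i _ => ?_
      by_cases hi : rt i = i
      · simp [hroot i i hi, hi]
      · have : f i ≠ i := fun h => by
          have := dpos i hi
          rw [h] at this
          omega
        simp [hTM, T, hi, Ne.symm this]
    · intro i j hij hb
      by_cases hi : rt i = i
      · rw [hroot i j hi, if_neg hij]
      · have hdi : d i ≤ Finset.univ.sup d := Finset.le_sup (Finset.mem_univ i)
        by_cases hj : rt j = j
        · simp [hi, hj] at hb
          omega
        · simp only [hi, hj, if_false] at hb
          have : f j ≠ i := fun h => by
            have := dpos j hj
            rw [h] at this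
            omega
          simp [hTM, T, hi, hij, Ne.symm this]
  rw [← hdet, Matrix.det_mul, hT, one_mul]

theorem orbitProd_apply {V : Type*} (f : V → V) (u : V → ℂ) (v : V)
    (hv : v ∈ Function.periodicPts f) : orbitProd f u (f v) = orbitProd f u v := by
  unfold orbitProd
  rw [Function.minimalPeriod_apply hv]
  have hpos := Function.minimalPeriod_pos_of_mem_periodicPts hv
  obtain ⟨k, hk⟩ := Nat.exists_eq_succ_of_ne_zero hpos.ne'
  have hit := Function.iterate_minimalPeriod (f := f) (x := v)
  rw [hk] at hit ⊢
  rw [Finset.prod_range_succ, Finset.prod_range_succ']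
  congr 1
  change u (f^[k+1] v) = _
  rw [hit]; rfl

theorem orbitProd_iterate {V : Type*} (f : V → V) (u : V → ℂ) (k : ℕ) (v : V)
    (hv : v ∈ Function.periodicPts f) : orbitProd f u (f^[k] v) = orbitProd f u v := by
  induction k generalizing v with
  | zero => rfl
  | succ k ih =>
    rw [Function.iterate_succ_apply, ih _ (by
      obtain ⟨n, hn, hp⟩ := hv
      exact ⟨n, hn, hp.apply⟩), orbitProd_apply f u v hv]

/-! ### Edges and connected components -/

theorem edgeOf_eq_iff (X : SerreGraph) (h h' : X.H) :
    X.edgeOf h = X.edgeOf h' ↔ h = h' ∨ h = X.inv h' := by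
  constructor
  · intro heq
    have := Quot.eqvGen_exact heq
    clear heq
    induction this with
    | rel a b hab => right; rw [hab, X.inv_inv]
    | refl a => left; rfl
    | symm a b _ ih =>
      rcases ih with ih | ih
      · left; exact ih.symm
      · right; rw [ih, X.inv_inv]
    | trans a b c _ _ ih1 ih2 =>
      rcases ih1 with rfl | rfl <;> rcases ih2 with rfl | rfl
      · left; rfl
      · right; rfl
      · right; rfl
      · left; exact X.inv_inv _
  · rintro (rfl | rfl)
    · rfl
    · exact X.edgeOf_inv _

theorem adjStep_symm (X : SerreGraph) (F : Finset X.Edge) {u v : X.V} (h : X.adjStep F u v) :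
    X.adjStep F v u := by
  obtain ⟨k, h1, h2, h3⟩ := h
  exact ⟨X.inv k, h2, by rw [X.inv_inv, h1], by rwa [X.edgeOf_inv]⟩

theorem compRel_symm (X : SerreGraph) (F : Finset X.Edge) {u v : X.V} (h : X.compRel F u v) :
    X.compRel F v u := by
  induction h with
  | refl => exact Relation.ReflTransGen.refl
  | tail _ hs ih => exact Relation.ReflTransGen.head (X.adjStep_symm F hs) ih

theorem mem_compVerts (X : SerreGraph) (F : Finset X.Edge) (u v : X.V) :
    u ∈ X.compVerts F v ↔ X.compRel F v u := by
  simp [compVerts]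

theorem compVerts_eq (X : SerreGraph) (F : Finset X.Edge) {u v : X.V} (h : X.compRel F u v) :
    X.compVerts F u = X.compVerts F v := by
  ext w
  rw [mem_compVerts, mem_compVerts]
  exact ⟨fun hw => (X.compRel_symm F h).trans hw, fun hw => h.trans hw⟩

theorem self_mem_compVerts (X : SerreGraph) (F : Finset X.Edge) (v : X.V) :
    v ∈ X.compVerts F v := (X.mem_compVerts F v v).2 Relation.ReflTransGen.refl

theorem compVerts_mem_components (X : SerreGraph) (F : Finset X.Edge) (v : X.V) :
    X.compVerts F v ∈ X.components F := Finset.mem_image_of_mem _ (Finset.mem_univ _)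

theorem compVerts_eq_of_mem (X : SerreGraph) (F : Finset X.Edge) {C : Finset X.V}
    (hC : C ∈ X.components F) {v : X.V} (hv : v ∈ C) : X.compVerts F v = C := by
  obtain ⟨w, _, rfl⟩ := Finset.mem_image.1 hC
  exact (X.compVerts_eq F ((X.mem_compVerts F _ _).1 hv)).symm

theorem mem_edgesIn (X : SerreGraph) (F : Finset X.Edge) (C : Finset X.V) (e : X.Edge) :
    e ∈ X.edgesIn F C ↔ e ∉ F ∧ ∃ h, X.edgeOf h = e ∧ X.root h ∈ C := by
  simp [edgesIn]

theorem compRel_root_inv (X : SerreGraph) (F : Finset X.Edge) (h : X.H) (hF : X.edgeOf h ∉ F) :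
    X.compRel F (X.root h) (X.root (X.inv h)) :=
  Relation.ReflTransGen.single ⟨h, rfl, rfl, hF⟩

theorem compRel_of_edgeOf_eq (X : SerreGraph) (F : Finset X.Edge) {h h' : X.H}
    (heq : X.edgeOf h = X.edgeOf h') (hF : X.edgeOf h ∉ F) :
    X.compRel F (X.root h) (X.root h') := by
  rcases (X.edgeOf_eq_iff h' h).1 heq.symm with rfl | rfl
  · exact Relation.ReflTransGen.refl
  · exact X.compRel_root_inv F h hF

theorem root_mem_of_mem_edgesIn (X : SerreGraph) (F : Finset X.Edge) {C : Finset X.V}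
    (hC : C ∈ X.components F) {h : X.H} (he : X.edgeOf h ∈ X.edgesIn F C) : X.root h ∈ C := by
  obtain ⟨hF, h', heq, hr⟩ := (X.mem_edgesIn F C _).1 he
  have h1 : X.compRel F (X.root h') (X.root h) :=
    X.compRel_of_edgeOf_eq F heq (by rwa [heq])
  rw [← X.compVerts_eq_of_mem F hC hr, mem_compVerts]
  exact h1

/-! ### Matchings of vertices into incident edges -/

/-- An assignment of a half-edge `m v` rooted at `v` to every vertex `v`, such that the
underlying edges avoid `F` and are pairwise distinct. Equivalently, a matching of the vertices
into the edges of `X ∖ F` which sends each vertex to an incident edge, together with, for a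
loop, the choice of one of its two halves. -/
structure IsMatching (X : SerreGraph) (F : Finset X.Edge) (m : X.V → X.H) : Prop where
  root_eq : ∀ v, X.root (m v) = v
  notMem : ∀ v, X.edgeOf (m v) ∉ F
  inj : Function.Injective fun v => X.edgeOf (m v)

/-- A distance to `r` in `X ∖ F`: every vertex other than `r` in the component of `r` has a
neighbour strictly closer to `r`. -/
theorem exists_dist (X : SerreGraph) (F : Finset X.Edge) (r : X.V) :
    ∃ δ : X.V → ℕ, ∀ v, v ≠ r → X.compRel F v r →
      ∃ h, X.root h = v ∧ X.edgeOf h ∉ F ∧ δ (X.root (X.inv h)) < δ v := by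
  -- `P n v` says that there is a walk of length `n` from `v` to `r` in `X ∖ F`.
  let P : ℕ → X.V → Prop := fun n => Nat.rec (fun v => v = r)
    (fun _ p v => ∃ w, X.adjStep F v w ∧ p w) n
  refine ⟨fun v => sInf {n | P n v}, fun v hv hvr => ?_⟩
  have hex : ∃ n, P n v := by
    clear hv
    induction hvr using Relation.ReflTransGen.head_induction_on with
    | refl => exact ⟨0, rfl⟩
    | head hs _ ih =>
      obtain ⟨n, hn⟩ := ih
      exact ⟨n + 1, _, hs, hn⟩
  have hmem : P (sInf {n | P n v}) v := Nat.sInf_mem (s := {n | P n v}) hex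
  cases hn : sInf {n | P n v} with
  | zero => rw [hn] at hmem; exact absurd hmem hv
  | succ n =>
    rw [hn] at hmem
    obtain ⟨w, ⟨h, h1, h2, h3⟩, hw⟩ := hmem
    refine ⟨h, h1, h3, ?_⟩
    rw [h2]
    change sInf {n | P n w} < sInf {n | P n v}
    rw [hn]
    exact Nat.lt_succ_of_le (Nat.sInf_le hw)

/-- Genus one in every component gives a matching, by Hall's theorem within each component `C`.
A proper subset `A` of `C` misses some `r ∈ C`, and the first edges of shortest paths to `r`
are distinct for distinct elements of `A`; for `A = C` the bound is the genus condition. -/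
theorem exists_isMatching (X : SerreGraph) (F : Finset X.Edge)
    (hF : ∀ C ∈ X.components F, (X.edgesIn F C).card = C.card) :
    ∃ m, X.IsMatching F m := by
  classical
  let t : X.V → Finset X.Edge := fun v =>
    Finset.univ.filter fun e => e ∉ F ∧ ∃ h, X.edgeOf h = e ∧ X.root h = v
  have hloc : ∀ C : X.components F, ∃ φ : C.1 → X.Edge, Function.Injective φ ∧
      ∀ v, φ v ∈ t v.1 := by
    rintro ⟨C, hC⟩
    refine (Finset.all_card_le_biUnion_card_iff_exists_injective
      (fun v : {v // v ∈ C} => t v.1)).1 fun A => ?_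
    by_cases hA : A = Finset.univ
    · have hsub : X.edgesIn F C ⊆ A.biUnion fun v => t v.1 := by
        intro e he
        obtain ⟨heF, h, rfl, hr⟩ := (X.mem_edgesIn F C e).1 he
        rw [Finset.mem_biUnion]
        exact ⟨⟨X.root h, hr⟩, by simp [hA], by simp [t, heF]; exact ⟨h, rfl, rfl⟩⟩
      calc A.card = C.card := by rw [hA, Finset.card_univ, Fintype.card_coe]
        _ = (X.edgesIn F C).card := (hF C hC).symm
        _ ≤ _ := Finset.card_le_card hsub
    · obtain ⟨r, hr⟩ : ∃ r, r ∉ A := by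
        by_contra hcon
        push Not at hcon
        exact hA (Finset.eq_univ_iff_forall.2 hcon)
      obtain ⟨δ, hδ⟩ := X.exists_dist F r.1
      have hpar : ∀ v : {v // v ∈ C}, v ∈ A → ∃ h, X.root h = v.1 ∧ X.edgeOf h ∉ F ∧
          δ (X.root (X.inv h)) < δ v.1 := by
        intro v hv
        refine hδ v.1 (fun hh => hr ?_) ?_
        · rwa [← Subtype.ext hh]
        · rw [← mem_compVerts, X.compVerts_eq_of_mem F hC v.2]
          exact r.2
      rcases A.eq_empty_or_nonempty with rfl | ⟨a, ha⟩
      · simp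
      have : Nonempty X.H := ⟨(hpar a ha).choose⟩
      choose! p hp1 hp2 hp3 using hpar
      refine Finset.card_le_card_of_injOn (fun v => X.edgeOf (p v)) ?_ ?_
      · intro v hv
        simp only [Finset.coe_biUnion, Set.mem_iUnion]
        exact ⟨v, hv, by simpa [t] using ⟨hp2 v hv, p v, rfl, hp1 v hv⟩⟩
      · intro v hv w hw heq
        rcases (X.edgeOf_eq_iff _ _).1 heq with h | h
        · exact Subtype.ext (by rw [← hp1 v hv, ← hp1 w hw, h])
        · -- The same edge traversed in opposite directions cannot decrease `δ` both times.
          exfalso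
          have h1 := hp3 v hv
          have h2 := hp3 w hw
          rw [h, X.inv_inv, hp1 w hw] at h1
          rw [← h, hp1 v hv] at h2
          omega
  choose φ hφ hφt using hloc
  have hm : ∀ v, ∃ h, X.edgeOf h = φ ⟨_, X.compVerts_mem_components F v⟩
      ⟨v, X.self_mem_compVerts F v⟩ ∧ X.root h = v := fun v =>
    (by simpa [t] using hφt ⟨_, X.compVerts_mem_components F v⟩ ⟨v, X.self_mem_compVerts F v⟩ :
      _ ∧ _).2
  have hm' : ∀ v, φ ⟨_, X.compVerts_mem_components F v⟩ ⟨v, X.self_mem_compVerts F v⟩ ∉ F :=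
    fun v => (by
      simpa [t] using hφt ⟨_, X.compVerts_mem_components F v⟩ ⟨v, X.self_mem_compVerts F v⟩ :
      _ ∧ _).1
  choose m hm1 hm2 using hm
  refine ⟨m, hm2, fun v => by rw [hm1]; exact hm' v, ?_⟩
  intro v w heq
  have hF : X.edgeOf (m v) ∉ F := by rw [hm1]; exact hm' v
  have hrel := X.compRel_of_edgeOf_eq F heq hF
  rw [hm2, hm2] at hrel
  have hC := X.compVerts_eq F hrel
  have key : ∀ (C : X.components F) (hv : v ∈ C.1), C.1 = X.compVerts F v →
      X.edgeOf (m v) = φ C ⟨v, hv⟩ := by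
    rintro ⟨C, hC⟩ hv rfl
    exact hm1 v
  have h1 := key ⟨_, X.compVerts_mem_components F w⟩ (by
    change v ∈ X.compVerts F w
    rw [← hC]; exact X.self_mem_compVerts F v) hC.symm
  have h2 := hm1 w
  have := hφ _ (h1.symm.trans (heq.trans h2))
  exact congrArg Subtype.val this

namespace IsMatching

variable {X : SerreGraph} {F : Finset X.Edge} {m : X.V → X.H}

/-- If `X ∖ F` has as many edges as vertices, every edge of `X ∖ F` is matched. -/
theorem exists_eq (hm : X.IsMatching F m)
    (hcard : F.card + Fintype.card X.V = Fintype.card X.Edge) {e : X.Edge} (he : e ∉ F) :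
    ∃ v, X.edgeOf (m v) = e := by
  have h1 : Finset.univ.image (fun v => X.edgeOf (m v)) = Fᶜ := by
    apply Finset.eq_of_subset_of_card_le
    · intro e' he'
      obtain ⟨v, _, rfl⟩ := Finset.mem_image.1 he'
      exact Finset.mem_compl.2 (hm.notMem v)
    · rw [Finset.card_image_of_injective _ hm.inj, Finset.card_compl, Finset.card_univ]
      omega
  have h2 : e ∈ Finset.univ.image (fun v => X.edgeOf (m v)) := by
    rw [h1]; exact Finset.mem_compl.2 he
  simpa using h2

theorem half_cases (hm : X.IsMatching F m)
    (hcard : F.card + Fintype.card X.V = Fintype.card X.Edge) {h : X.H} (he : X.edgeOf h ∉ F) :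
    h = m (X.root h) ∨ h = X.inv (m (X.root (X.inv h))) := by
  obtain ⟨v, hv⟩ := hm.exists_eq hcard he
  rcases (X.edgeOf_eq_iff _ _).1 hv.symm with rfl | rfl
  · left; rw [hm.root_eq]
  · right; rw [X.inv_inv, hm.root_eq]

/-- A matching of `X ∖ F` with `|E(X ∖ F)| = |V(X)|` forces every component to have genus one:
it restricts to a bijection between the vertices and the edges of the component. -/
theorem card_edgesIn (hm : X.IsMatching F m)
    (hcard : F.card + Fintype.card X.V = Fintype.card X.Edge)
    {C : Finset X.V} (hC : C ∈ X.components F) : (X.edgesIn F C).card = C.card := by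
  rw [← Finset.card_image_of_injective C hm.inj]
  congr 1
  ext e
  constructor
  · intro he
    obtain ⟨v, rfl⟩ := hm.exists_eq hcard ((X.mem_edgesIn F C e).1 he).1
    have := X.root_mem_of_mem_edgesIn F hC he
    rw [hm.root_eq] at this
    exact Finset.mem_image_of_mem _ this
  · intro he
    obtain ⟨v, hv, rfl⟩ := Finset.mem_image.1 he
    exact (X.mem_edgesIn F C _).2 ⟨hm.notMem v, m v, rfl, by rwa [hm.root_eq]⟩

end IsMatching

/-- The functional graph of `m`: the other endpoint of the edge assigned to `v`. -/
def next (X : SerreGraph) (m : X.V → X.H) (v : X.V) : X.V := X.root (X.inv (m v))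

namespace IsMatching

variable {X : SerreGraph} {F : Finset X.Edge} {m : X.V → X.H}

theorem compRel_next (hm : X.IsMatching F m) (v : X.V) : X.compRel F v (X.next m v) := by
  have := X.compRel_root_inv F (m v) (hm.notMem v)
  rwa [hm.root_eq] at this

theorem compRel_iterate (hm : X.IsMatching F m) (k : ℕ) (v : X.V) :
    X.compRel F v ((X.next m)^[k] v) := by
  induction k with
  | zero => exact Relation.ReflTransGen.refl
  | succ k ih => rw [Function.iterate_succ_apply']; exact ih.trans (hm.compRel_next _)

/-- Every edge of `X ∖ F` joins some `v` to `next m v`, so connected vertices have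
eventually equal forward orbits. -/
theorem exists_iterate_eq (hm : X.IsMatching F m)
    (hcard : F.card + Fintype.card X.V = Fintype.card X.Edge) {v w : X.V}
    (h : X.compRel F v w) : ∃ a b, (X.next m)^[a] v = (X.next m)^[b] w := by
  induction h with
  | refl => exact ⟨0, 0, rfl⟩
  | @tail b c _ hs ih =>
    obtain ⟨p, q, hpq⟩ := ih
    obtain ⟨k, rfl, rfl, hk⟩ := hs
    rcases hm.half_cases hcard hk with h | h
    · refine ⟨p + 1, q, ?_⟩
      rw [Function.iterate_succ_apply', hpq, ← Function.iterate_succ_apply' (X.next m),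
        Function.iterate_succ_apply, next, ← h]
    · refine ⟨p, q + 1, ?_⟩
      rw [hpq, Function.iterate_succ_apply]
      conv_rhs => rw [next, ← h]

theorem exists_iterate_eq_of_periodic (hm : X.IsMatching F m)
    (hcard : F.card + Fintype.card X.V = Fintype.card X.Edge) {v r : X.V}
    (h : X.compRel F v r) (hr : r ∈ Function.periodicPts (X.next m)) :
    ∃ k, (X.next m)^[k] v = r := by
  obtain ⟨a, b, hab⟩ := hm.exists_iterate_eq hcard h
  obtain ⟨n, hn, hp⟩ := hr
  refine ⟨(b * n - b) + a, ?_⟩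
  rw [Function.iterate_add_apply, hab, ← Function.iterate_add_apply,
    Nat.sub_add_cancel (Nat.le_mul_of_pos_right b hn)]
  exact hp.const_mul b

theorem exists_periodic_mem (hm : X.IsMatching F m) {C : Finset X.V}
    (hC : C ∈ X.components F) : ∃ r ∈ C, r ∈ Function.periodicPts (X.next m) := by
  obtain ⟨v, _, rfl⟩ := Finset.mem_image.1 hC
  obtain ⟨i, j, hij, heq⟩ :=
    Finite.exists_ne_map_eq_of_infinite (fun k : ℕ => (X.next m)^[k] v)
  wlog hlt : i < j generalizing i j
  · exact this j i hij.symm heq.symm (by omega)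
  refine ⟨(X.next m)^[i] v, (X.mem_compVerts F _ _).2 (hm.compRel_iterate i v), j - i,
    by omega, ?_⟩
  change (X.next m)^[j - i] ((X.next m)^[i] v) = _
  rw [← Function.iterate_add_apply, Nat.sub_add_cancel hlt.le]
  exact heq.symm

end IsMatching

/-! ### Voltages and closed paths -/

theorem isClosedPath_map_range (X : SerreGraph) (L : ℕ → X.H) {n : ℕ} (hn : 0 < n)
    (hL : L n = L 0) : X.IsClosedPath ((List.range n).map L) ↔
      ∀ i < n, X.root (X.inv (L i)) = X.root (L (i + 1)) := by
  have happ : (List.range n).map L ++ ((List.range n).map L).take 1 =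
      (List.range (n + 1)).map L := by
    rw [List.range_succ, List.map_append]
    congr 1
    obtain ⟨k, rfl⟩ := Nat.exists_eq_succ_of_ne_zero hn.ne'
    simp [List.range_succ_eq_map, hL]
  unfold IsClosedPath
  rw [happ]
  change _ ∧ List.IsChain _ _ ↔ _
  rw [List.isChain_map, List.isChain_range_succ]
  constructor
  · exact fun h => h.2
  · exact fun h => ⟨by simpa using hn.ne', h⟩

/-- A nonempty list, read cyclically, as a periodic sequence. -/
theorem exists_eq_map_range {α : Type*} (l : List α) (hl : l ≠ []) :
    ∃ L : ℕ → α, (∀ i, L (i + l.length) = L i) ∧ l = (List.range l.length).map L := by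
  have hpos : 0 < l.length := List.length_pos_of_ne_nil hl
  refine ⟨fun i => l[i % l.length]'(Nat.mod_lt _ hpos), fun i => by simp, ?_⟩
  apply List.ext_getElem
  · simp
  · intro i h1 h2
    simp [Nat.mod_eq_of_lt h1]

section character

variable {G : Type} [CommGroup G]

theorem norm_char [Fintype G] (ρ : G →* ℂ) (g : G) : ‖ρ g‖ = 1 := by
  refine Complex.norm_eq_one_of_pow_eq_one (n := Fintype.card G) ?_ Fintype.card_ne_zero
  rw [← map_pow, pow_card_eq_one, map_one]

theorem char_inv [Fintype G] (ρ : G →* ℂ) (g : G) : ρ g⁻¹ = (starRingEnd ℂ) (ρ g) := by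
  have h1 : ρ g⁻¹ * ρ g = 1 := by rw [← map_mul, inv_mul_cancel, map_one]
  rw [← Complex.inv_eq_conj (norm_char ρ g)]
  exact eq_inv_of_mul_eq_one_left h1

/-- The value of `ρ` on the voltage of a half-edge. -/
noncomputable def halfChar (X : SerreGraph) (o : X.Orientation) (η : X.Edge → G) (ρ : G →* ℂ)
    (h : X.H) : ℂ := ρ (X.halfVoltage o η h)

theorem halfVoltage_inv (X : SerreGraph) (o : X.Orientation) (η : X.Edge → G) (h : X.H) :
    X.halfVoltage o η (X.inv h) = (X.halfVoltage o η h)⁻¹ := by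
  unfold halfVoltage
  rw [X.edgeOf_inv]
  rcases (X.edgeOf_eq_iff h (o.pick (X.edgeOf h))).1 (o.pick_spec _).symm with heq | heq
  · rw [if_pos heq, if_neg]
    rw [← heq]
    exact X.inv_ne h
  · have : X.inv h = o.pick (X.edgeOf h) := by
      conv_lhs => rw [heq, X.inv_inv]
    rw [if_pos this, if_neg, _root_.inv_inv]
    rw [← this]
    exact (X.inv_ne h).symm

theorem halfChar_inv [Fintype G] (X : SerreGraph) (o : X.Orientation) (η : X.Edge → G) (ρ : G →* ℂ)
    (h : X.H) : X.halfChar o η ρ (X.inv h) = (starRingEnd ℂ) (X.halfChar o η ρ h) := by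
  rw [halfChar, halfVoltage_inv, char_inv, halfChar]

theorem char_pathVoltage (X : SerreGraph) (o : X.Orientation) (η : X.Edge → G) (ρ : G →* ℂ)
    (L : ℕ → X.H) (n : ℕ) : ρ (X.pathVoltage o η ((List.range n).map L)) =
      ∏ i ∈ Finset.range n, X.halfChar o η ρ (L i) := by
  rw [pathVoltage, List.map_map, map_list_prod, List.map_map, Finset.prod_range]
  rw [← List.prod_ofFn, List.ofFn_eq_map, ← List.map_coe_finRange_eq_range, List.map_map]
  rfl

end character

/-! ### The cycle of a component -/

namespace IsMatching

variable {X : SerreGraph} {F : Finset X.Edge} {m : X.V → X.H}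

theorem exists_isEdgeCycle (hm : X.IsMatching F m) {C : Finset X.V}
    (hC : C ∈ X.components F) : ∃ l, X.IsEdgeCycle (X.edgesIn F C) l := by
  obtain ⟨r, hrC, hr⟩ := hm.exists_periodic_mem hC
  have hpos := Function.minimalPeriod_pos_of_mem_periodicPts hr
  refine ⟨(List.range (Function.minimalPeriod (X.next m) r)).map
    fun i => m ((X.next m)^[i] r), ?_, ?_, ?_⟩
  · rw [isClosedPath_map_range _ _ hpos
      (by rw [Function.iterate_minimalPeriod]; rfl)]
    intro i _
    rw [hm.root_eq, Function.iterate_succ_apply']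
    rfl
  · intro h hh
    obtain ⟨i, _, rfl⟩ := List.mem_map.1 hh
    refine (X.mem_edgesIn _ _ _).2 ⟨hm.notMem _, _, rfl, ?_⟩
    rw [hm.root_eq, ← X.compVerts_eq_of_mem F hC hrC, mem_compVerts]
    exact hm.compRel_iterate i r
  · rw [List.map_map]
    refine List.Nodup.map_on ?_ List.nodup_range
    intro i hi j hj hij
    rw [List.mem_range] at hi hj
    exact (Function.iterate_eq_iterate_iff_of_lt_minimalPeriod hi hj).1 (hm.inj hij)

/-- Uniqueness of the cycle of a component `C`. The edges of any edge cycle in `C` are matched,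
and each of its half-edges `h` is either `m (root h)` or the reverse of `m` at its far end. If
one of them is reversed then so is the next, because otherwise the two would traverse the same
edge. So the whole cycle follows the functional graph `next m`, forwards or backwards. Reversing
conjugates `ρ` of the voltage, which does not change the norm. -/
theorem norm_one_sub_pathVoltage {G : Type} [CommGroup G] [Fintype G]
    (o : X.Orientation) (η : X.Edge → G) (ρ : G →* ℂ) (hm : X.IsMatching F m)
    (hcard : F.card + Fintype.card X.V = Fintype.card X.Edge)
    {C : Finset X.V} (hC : C ∈ X.components F) {l : List X.H}
    (hl : X.IsEdgeCycle (X.edgesIn F C) l) {r : X.V} (hrC : r ∈ C)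
    (hr : r ∈ Function.periodicPts (X.next m)) :
    ‖1 - ρ (X.pathVoltage o η l)‖ = ‖1 - orbitProd (X.next m)
      (fun v => (starRingEnd ℂ) (X.halfChar o η ρ (m v))) r‖ := by
  obtain ⟨hcl, hmem, hnd⟩ := hl
  obtain ⟨L, hper, hlL⟩ := exists_eq_map_range l hcl.1
  have hpos : 0 < l.length := List.length_pos_of_ne_nil hcl.1
  generalize l.length = n at *
  subst hlL
  have hLn : L n = L 0 := by simpa using hper 0
  have hmod : ∀ i, L (i % n) = L i := by
    have : ∀ q i, L (i + n * q) = L i := by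
      intro q
      induction q with
      | zero => intro i; rfl
      | succ q ih => intro i; rw [Nat.mul_succ, ← Nat.add_assoc, hper, ih]
    intro i
    conv_rhs => rw [← Nat.mod_add_div i n, this]
  have hLE : ∀ i, X.edgeOf (L i) ∈ X.edgesIn F C := fun i => by
    rw [← hmod]
    exact hmem _ (List.mem_map.2 ⟨_, List.mem_range.2 (Nat.mod_lt i hpos), rfl⟩)
  have hLF : ∀ i, X.edgeOf (L i) ∉ F := fun i => ((X.mem_edgesIn _ _ _).1 (hLE i)).1
  have hstep : ∀ i, X.root (X.inv (L i)) = X.root (L (i + 1)) := by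
    intro i
    have := (X.isClosedPath_map_range L hpos hLn).1 hcl (i % n) (Nat.mod_lt i hpos)
    rw [hmod] at this
    rw [this, ← hmod (i % n + 1), ← hmod (i + 1), Nat.mod_add_mod]
  have hinj : ∀ i < n, ∀ j < n, X.edgeOf (L i) = X.edgeOf (L j) → i = j := by
    rw [List.map_map] at hnd
    intro i hi j hj hij
    exact List.inj_on_of_nodup_map hnd (List.mem_range.2 hi) (List.mem_range.2 hj) hij
  have hinj' : ∀ i j, X.edgeOf (L i) = X.edgeOf (L j) → L i = L j := by
    intro i j hij
    rw [← hmod i, ← hmod j] at hij ⊢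
    rw [hinj _ (Nat.mod_lt i hpos) _ (Nat.mod_lt j hpos) hij]
  set f := X.next m with hf
  -- It suffices to find a vertex of `C` of minimal period `n` around whose orbit the product
  -- agrees with `ρ` of the voltage, up to conjugation.
  have hfinal : ∀ v : X.V, v ∈ C → f^[n] v = v → (∀ j, 0 < j → j < n → f^[j] v ≠ v) →
      (ρ (X.pathVoltage o η ((List.range n).map L)) = (starRingEnd ℂ) (∏ i ∈ Finset.range n,
        (starRingEnd ℂ) (X.halfChar o η ρ (m (f^[i] v)))) ∨
      ρ (X.pathVoltage o η ((List.range n).map L)) = ∏ i ∈ Finset.range n,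
        (starRingEnd ℂ) (X.halfChar o η ρ (m (f^[i] v)))) →
      ‖1 - ρ (X.pathVoltage o η ((List.range n).map L))‖ = ‖1 - orbitProd f
        (fun v => (starRingEnd ℂ) (X.halfChar o η ρ (m v))) r‖ := by
    intro v hvC hv hmin hprod
    have hp : Function.IsPeriodicPt f n v := hv
    have hvp : v ∈ Function.periodicPts f := ⟨n, hpos, hp⟩
    have hmp : Function.minimalPeriod f v = n := by
      refine le_antisymm (hp.minimalPeriod_le hpos) (not_lt.1 fun hlt => ?_)
      exact hmin _ (hp.minimalPeriod_pos hpos) hlt Function.iterate_minimalPeriod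
    have hrel : X.compRel F v r := by
      rw [← mem_compVerts, X.compVerts_eq_of_mem F hC hvC]
      exact hrC
    obtain ⟨k, rfl⟩ := hm.exists_iterate_eq_of_periodic hcard hrel hr
    rw [orbitProd_iterate _ _ _ _ hvp, orbitProd, hmp]
    rcases hprod with h | h
    · rw [h, ← Complex.norm_conj, map_sub, map_one, Complex.conj_conj]
    · rw [h]
  -- Either `L` follows `m` throughout, or some half-edge of it is a reversed one.
  by_cases hfwd : ∀ i, L i = m (X.root (L i))
  · have hroot : ∀ i, X.root (L i) = f^[i] (X.root (L 0)) := by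
      intro i
      induction i with
      | zero => rfl
      | succ i ih =>
        rw [Function.iterate_succ_apply', ← ih, ← hstep i, hf, next, ← hfwd i]
    refine hfinal (X.root (L 0)) (X.root_mem_of_mem_edgesIn F hC (hLE 0)) ?_ ?_ (Or.inl ?_)
    · rw [← hroot, hLn]
    · intro j hj0 hjn hj
      rw [← hroot] at hj
      have : L j = L 0 := by rw [hfwd j, hfwd 0, hj]
      exact hj0.ne' (hinj j hjn 0 hpos (by rw [this]))
    · rw [char_pathVoltage, map_prod]
      refine Finset.prod_congr rfl fun i _ => ?_
      rw [Complex.conj_conj, ← hroot, ← hfwd]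
  · push Not at hfwd
    obtain ⟨i₀, hi₀⟩ := hfwd
    have hb0 : L i₀ = X.inv (m (X.root (X.inv (L i₀)))) :=
      (hm.half_cases hcard (hLF i₀)).resolve_left hi₀
    have hbstep : ∀ i, L i = X.inv (m (X.root (X.inv (L i)))) →
        L (i + 1) = X.inv (m (X.root (X.inv (L (i + 1))))) := by
      intro i hi
      refine (hm.half_cases hcard (hLF (i + 1))).resolve_left fun hcon => ?_
      rw [← hstep i] at hcon
      have hinv : L (i + 1) = X.inv (L i) := by
        conv_rhs => rw [hi, X.inv_inv]
        exact hcon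
      have := hinj' (i + 1) i (by rw [hinv, X.edgeOf_inv])
      exact X.inv_ne (L i) (by rw [← hinv, this])
    have hball : ∀ k, L (i₀ + k) = X.inv (m (X.root (X.inv (L (i₀ + k))))) := by
      intro k
      induction k with
      | zero => exact hb0
      | succ k ih => exact hbstep _ ih
    -- By periodicity the half-edges before `i₀` are reversed as well.
    have hb : ∀ i, L i = X.inv (m (X.root (L (i + 1)))) := by
      intro i
      have h1 : i₀ ≤ i + n * i₀ := (Nat.le_mul_of_pos_left i₀ hpos).trans (Nat.le_add_left _ _)
      have h2 := hball (i + n * i₀ - i₀)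
      rw [Nat.add_sub_cancel' h1] at h2
      have h3 : L (i + n * i₀) = L i := by rw [← hmod, Nat.add_mul_mod_self_left, hmod]
      rw [h3, hstep i] at h2
      exact h2
    have hroot : ∀ j, j ≤ n → X.root (L (n - j)) = f^[j] (X.root (L 0)) := by
      intro j
      induction j with
      | zero => intro _; rw [Nat.sub_zero, hLn]; rfl
      | succ j ih =>
        intro hj
        have h1 := hb (n - (j + 1))
        rw [show n - (j + 1) + 1 = n - j by omega, ih (by omega)] at h1
        rw [Function.iterate_succ_apply', h1]
        rfl
    refine hfinal (X.root (L 0)) (X.root_mem_of_mem_edgesIn F hC (hLE 0)) ?_ ?_ (Or.inr ?_)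
    · rw [← hroot n le_rfl, Nat.sub_self]
    · intro j hj0 hjn hj
      rw [← hroot j hjn.le] at hj
      have h1 := hb (n - j - 1)
      have h2 := hb (n - 1)
      rw [show n - j - 1 + 1 = n - j by omega, hj] at h1
      rw [show n - 1 + 1 = n by omega, hLn] at h2
      have := hinj (n - j - 1) (by omega) (n - 1) (by omega) (by rw [h1, h2])
      omega
    · rw [char_pathVoltage, ← Finset.prod_range_reflect]
      refine Finset.prod_congr rfl fun i hi => ?_
      have hi' := Finset.mem_range.1 hi
      rw [hb (n - 1 - i), halfChar_inv, show n - 1 - i + 1 = n - i by omega, hroot i hi'.le]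

theorem cycleWeight_eq {G : Type} [CommGroup G] [Fintype G]
    (o : X.Orientation) (η : X.Edge → G) (ρ : G →* ℂ) (hm : X.IsMatching F m)
    (hcard : F.card + Fintype.card X.V = Fintype.card X.Edge)
    {C : Finset X.V} (hC : C ∈ X.components F) {r : X.V} (hrC : r ∈ C)
    (hr : r ∈ Function.periodicPts (X.next m)) :
    cycleWeight X o η ρ (X.edgesIn F C) = ‖1 - orbitProd (X.next m)
      (fun v => (starRingEnd ℂ) (X.halfChar o η ρ (m v))) r‖ ^ 2 := by
  have hex := hm.exists_isEdgeCycle hC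
  rw [cycleWeight, dif_pos hex,
    hm.norm_one_sub_pathVoltage o η ρ hcard hC hex.choose_spec hrC hr]

/-- The determinant of the functional graph of a matching, with weights the conjugated
character values, is up to a phase the product of `1 - ρ(η(C))` over the components `C`. -/
theorem norm_det_sq_eq_prod_cycleWeight {G : Type} [CommGroup G] [Fintype G]
    (hne : Nonempty X.V) (o : X.Orientation) (η : X.Edge → G) (ρ : G →* ℂ) (hm : X.IsMatching F m)
    (hcard : F.card + Fintype.card X.V = Fintype.card X.Edge) :
    ‖(Matrix.of fun i j : X.V => (if i = j then (1 : ℂ) else 0) -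
      (if X.next m j = i then (starRingEnd ℂ) (X.halfChar o η ρ (m j)) else 0)).det‖ ^ 2 =
    ∏ C ∈ X.components F, cycleWeight X o η ρ (X.edgesIn F C) := by
  have hrep : ∀ C : Finset X.V, ∃ r, C ∈ X.components F →
      r ∈ C ∧ r ∈ Function.periodicPts (X.next m) := by
    intro C
    by_cases hC : C ∈ X.components F
    · obtain ⟨r, h⟩ := hm.exists_periodic_mem hC
      exact ⟨r, fun _ => h⟩
    · exact ⟨hne.some, fun h => absurd h hC⟩
  choose R hR using hrep
  rw [det_one_sub_functional (X.next m) _ (fun v => R (X.compVerts F v)), norm_prod,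
    ← Finset.prod_pow]
  · symm
    refine Finset.prod_bij (fun C _ => R C) ?_ ?_ ?_ ?_
    · intro C hC
      simp only [Finset.mem_filter, Finset.mem_univ, true_and]
      rw [X.compVerts_eq_of_mem F hC (hR C hC).1]
    · intro C hC C' hC' heq
      rw [← X.compVerts_eq_of_mem F hC (hR C hC).1, heq,
        X.compVerts_eq_of_mem F hC' (hR C' hC').1]
    · intro r hr
      exact ⟨_, X.compVerts_mem_components F r, (Finset.mem_filter.1 hr).2⟩
    · intro C hC
      exact hm.cycleWeight_eq o η ρ hcard hC (hR C hC).1 (hR C hC).2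
  · intro v
    have hmem := X.compVerts_mem_components F v
    exact hm.exists_iterate_eq_of_periodic hcard
      ((X.mem_compVerts F _ _).1 (hR _ hmem).1) (hR _ hmem).2
  · intro v
    rw [X.compVerts_eq F (hm.compRel_next v)]

end IsMatching

/-! ### The twisted incidence matrix -/

variable {G : Type} [CommGroup G] {X : SerreGraph}

/-- An edge consists of exactly two half-edges, so a sum over half-edges is a sum over edges. -/
theorem sum_half {M : Type*} [AddCommMonoid M] (o : X.Orientation) (φ : X.H → M) :
    ∑ h, φ h = ∑ e, (φ (o.pick e) + φ (X.inv (o.pick e))) := by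
  rw [← Finset.sum_fiberwise (s := Finset.univ) (g := X.edgeOf)]
  refine Finset.sum_congr rfl fun e _ => ?_
  rw [← Finset.sum_pair (X.inv_ne (o.pick e)).symm]
  refine Finset.sum_congr ?_ fun _ _ => rfl
  ext h
  have := X.edgeOf_eq_iff h (o.pick e)
  rw [o.pick_spec] at this
  simpa using this

/-- The `ρ`-twisted incidence matrix: the column of an edge `e` oriented from `s` to `t` is
`δ_s - conj(ρ(η(e))) δ_t`, which vanishes for a loop with `ρ(η(e)) = 1`. -/
noncomputable def twistedInc (X : SerreGraph) (o : X.Orientation) (η : X.Edge → G)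
    (ρ : G →* ℂ) : Matrix X.V X.Edge ℂ :=
  Matrix.of fun v e => (if X.root (o.pick e) = v then 1 else 0) -
    (starRingEnd ℂ) (ρ (η e)) * (if X.root (X.inv (o.pick e)) = v then 1 else 0)

theorem conj_char_mul_char [Fintype G] (ρ : G →* ℂ) (g : G) : (starRingEnd ℂ) (ρ g) * ρ g = 1 := by
  rw [Complex.conj_mul', norm_char]
  norm_num

theorem twistedLapl_eq_mul [Fintype G] (o : X.Orientation) (η : X.Edge → G) (ρ : G →* ℂ) :
    X.twistedLapl o η ρ = X.twistedInc o η ρ * (X.twistedInc o η ρ).conjTranspose := by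
  have hval : ∀ u, (X.valency u : ℂ) = ∑ e, ((if X.root (o.pick e) = u then 1 else 0) +
      (if X.root (X.inv (o.pick e)) = u then 1 else 0)) := by
    intro u
    rw [← sum_half o (fun h => if X.root h = u then (1 : ℂ) else 0), Finset.sum_boole, valency,
      Nat.card_eq_fintype_card, Fintype.card_subtype]
  ext u v
  have hq : X.qMatrix u v = ∑ e,
      ((if X.root (o.pick e) = u then 1 else 0) * (if X.root (o.pick e) = v then 1 else 0) +
      (if X.root (X.inv (o.pick e)) = u then 1 else 0) *
      (if X.root (X.inv (o.pick e)) = v then 1 else 0)) := by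
    rw [qMatrix, Matrix.of_apply]
    split_ifs with h
    · subst h
      rw [hval]
      refine Finset.sum_congr rfl fun e _ => ?_
      split_ifs <;> norm_num
    · symm
      refine Finset.sum_eq_zero fun e _ => ?_
      split_ifs <;> simp_all
  rw [twistedLapl, Matrix.sub_apply, hq, twistedAdj, Matrix.of_apply, Finset.sum_filter,
    Finset.sum_filter, ← Finset.sum_add_distrib, ← Finset.sum_sub_distrib, Matrix.mul_apply]
  refine Finset.sum_congr rfl fun e _ => ?_
  have h1 := conj_char_mul_char ρ (η e)
  rw [Matrix.conjTranspose_apply, twistedInc, Matrix.of_apply, Matrix.of_apply]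
  simp only [ite_and, ← starRingEnd_apply, map_sub, map_mul,
    Complex.conj_conj, apply_ite (starRingEnd ℂ), map_one, map_zero]
  split_ifs <;> first | ring1 | linear_combination -h1

/-- The column of an edge does not depend on its orientation up to a phase: it can be written
with respect to either of its half-edges `h`. -/
theorem exists_twistedInc_edgeOf [Fintype G] (o : X.Orientation) (η : X.Edge → G) (ρ : G →* ℂ) (h : X.H) :
    ∃ ε : ℂ, ‖ε‖ = 1 ∧ ∀ w, X.twistedInc o η ρ w (X.edgeOf h) =
      ε * ((if w = X.root h then 1 else 0) -
        (if X.root (X.inv h) = w then (starRingEnd ℂ) (X.halfChar o η ρ h) else 0)) := by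
  by_cases hp : h = o.pick (X.edgeOf h)
  · refine ⟨1, norm_one, fun w => ?_⟩
    rw [twistedInc, Matrix.of_apply, halfChar, halfVoltage, if_pos hp, ← hp]
    simp [eq_comm]
  · have hinv : o.pick (X.edgeOf h) = X.inv h :=
      ((X.edgeOf_eq_iff _ _).1 (o.pick_spec (X.edgeOf h))).resolve_left (Ne.symm hp)
    have h1 := conj_char_mul_char ρ (η (X.edgeOf h))
    refine ⟨-(starRingEnd ℂ) (ρ (η (X.edgeOf h))), ?_, fun w => ?_⟩
    · rw [norm_neg, Complex.norm_conj, norm_char]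
    · rw [twistedInc, Matrix.of_apply, halfChar, halfVoltage, if_neg hp, hinv, X.inv_inv,
        char_inv, Complex.conj_conj]
      simp only [eq_comm (a := w)]
      split_ifs <;> first | ring1 | linear_combination -h1

/-- Written with respect to the half-edges of a matching, the maximal minor of the twisted
incidence matrix is that of a functional graph, up to a phase. -/
theorem IsMatching.norm_det_twistedInc [Fintype G] {F : Finset X.Edge} {m : X.V → X.H}
    (hm : X.IsMatching F m) (hne : Nonempty X.V)
    (o : X.Orientation) (η : X.Edge → G) (ρ : G →* ℂ)
    (hcard : F.card + Fintype.card X.V = Fintype.card X.Edge) :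
    ‖((X.twistedInc o η ρ).submatrix id fun v => X.edgeOf (m v)).det‖ ^ 2 =
      ∏ C ∈ X.components F, cycleWeight X o η ρ (X.edgesIn F C) := by
  choose ε hε hB using fun v => exists_twistedInc_edgeOf o η ρ (m v)
  rw [← hm.norm_det_sq_eq_prod_cycleWeight hne o η ρ hcard]
  congr 1
  have : (X.twistedInc o η ρ).submatrix id (fun v => X.edgeOf (m v)) =
      Matrix.of fun i j => ε j * (Matrix.of fun i j : X.V => (if i = j then (1 : ℂ) else 0) -
      (if X.next m j = i then (starRingEnd ℂ) (X.halfChar o η ρ (m j)) else 0)) i j := by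
    ext i j
    rw [Matrix.submatrix_apply, id, hB, hm.root_eq]
    rfl
  rw [this, Matrix.det_mul_row, norm_mul, norm_prod, Finset.prod_eq_one fun v _ => hε v, one_mul]

/-- Without a matching, every term of the Leibniz expansion of the minor vanishes. -/
theorem det_twistedInc_eq_zero (o : X.Orientation) (η : X.Edge → G) (ρ : G →* ℂ)
    {F : Finset X.Edge} (hF : ¬ ∃ m, X.IsMatching F m) (p : X.V → X.Edge)
    (hp : Function.Injective p) (hpF : ∀ v, p v ∉ F) :
    ((X.twistedInc o η ρ).submatrix id p).det = 0 := by
  rw [Matrix.det_apply']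
  refine Finset.sum_eq_zero fun σ _ => mul_eq_zero_of_right _ ?_
  by_contra hne
  replace hne := Finset.prod_ne_zero_iff.1 hne
  -- A nonzero term assigns to each vertex an incident edge in the image of `p`.
  have hh : ∀ v, ∃ h, X.root h = v ∧ X.edgeOf h = p (σ.symm v) := by
    intro v
    have := hne (σ.symm v) (Finset.mem_univ _)
    rw [Matrix.submatrix_apply, id, σ.apply_symm_apply, twistedInc, Matrix.of_apply] at this
    by_cases h1 : X.root (o.pick (p (σ.symm v))) = v
    · exact ⟨_, h1, o.pick_spec _⟩
    · by_cases h2 : X.root (X.inv (o.pick (p (σ.symm v)))) = v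
      · exact ⟨_, h2, by rw [X.edgeOf_inv, o.pick_spec]⟩
      · simp [h1, h2] at this
  choose m hm using hh
  refine hF ⟨m, fun v => (hm v).1, fun v => ?_, fun u v huv => ?_⟩
  · rw [(hm v).2]
    exact hpF _
  · simp only [(hm _).2] at huv
    exact σ.symm.injective (hp huv)

/-- An enumeration of each edge set `S` of size `|V(X)|` by the vertices, which comes from a
matching avoiding the complement of `S` whenever there is one. -/
theorem exists_enumeration (X : SerreGraph) (hE : Nonempty X.Edge) : ∃ g : Finset X.Edge → X.V → X.Edge,
    ∀ S : Finset X.Edge, S.card = Fintype.card X.V →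
      (Function.Injective (g S) ∧ Finset.univ.image (g S) = S) ∧
      ((∃ m, X.IsMatching Sᶜ m) →
        ∃ m, X.IsMatching Sᶜ m ∧ g S = fun v => X.edgeOf (m v)) := by
  have key : ∀ S : Finset X.Edge, ∃ p : X.V → X.Edge, S.card = Fintype.card X.V →
      (Function.Injective p ∧ Finset.univ.image p = S) ∧
      ((∃ m, X.IsMatching Sᶜ m) →
        ∃ m, X.IsMatching Sᶜ m ∧ p = fun v => X.edgeOf (m v)) := by
    intro S
    by_cases hex : ∃ m, X.IsMatching Sᶜ m
    · obtain ⟨m, hm⟩ := hex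
      refine ⟨fun v => X.edgeOf (m v), fun hS => ⟨⟨hm.inj, ?_⟩, fun _ => ⟨m, hm, rfl⟩⟩⟩
      refine Finset.eq_of_subset_of_card_le ?_ ?_
      · intro e he
        obtain ⟨v, _, rfl⟩ := Finset.mem_image.1 he
        simpa using hm.notMem v
      · rw [Finset.card_image_of_injective _ hm.inj, hS, Finset.card_univ]
    · by_cases hS : S.card = Fintype.card X.V
      · have e : X.V ≃ S := Fintype.equivOfCardEq (by rw [Fintype.card_coe, hS])
        refine ⟨fun v => (e v : X.Edge), fun _ =>
          ⟨⟨Subtype.val_injective.comp e.injective, ?_⟩, fun h => absurd h hex⟩⟩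
        ext x
        simp only [Finset.mem_image, Finset.mem_univ, true_and]
        exact ⟨fun ⟨v, hv⟩ => hv ▸ (e v).2,
          fun hx => ⟨e.symm ⟨x, hx⟩, by rw [e.apply_symm_apply]⟩⟩
      · exact ⟨fun _ => hE.some, fun h => absurd h hS⟩
  choose g hg using key
  exact ⟨g, hg⟩

end SerreGraph

open SerreGraph in
/-- **Proposition.** For a finite connected oriented graph `X` of genus `g`, a voltage
assignment `η` valued in a finite abelian group `G`, and a character `ρ : G → ℂ*`, the
determinant of the `ρ`-twisted Laplacian `L_ρ = Q - A_ρ` equals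
`∑_F ∏ᵢ |1 - ρ(η(Xᵢ))|²`, the sum over all `(g-1)`-element subsets `F ⊆ E(X)` such that
every connected component `Xᵢ` of `X ∖ F` has genus one, and `η(Xᵢ)` the oriented sum of
the voltages along the unique cycle of `Xᵢ`. -/
theorem det_twistedLapl
    (G : Type) [CommGroup G] [Fintype G] (X : SerreGraph) (hX : X.Connected)
    (o : X.Orientation) (η : X.Edge → G) (ρ : G →* ℂ) :
    (X.twistedLapl o η ρ).det =
      ∑ F ∈ (Set.toFinite {F : Finset X.Edge |
          F.card + Fintype.card X.V = Fintype.card X.Edge ∧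
          ∀ C ∈ X.components F, (X.edgesIn F C).card = C.card}).toFinset,
        ∏ C ∈ X.components F, ((cycleWeight X o η ρ (X.edgesIn F C) : ℝ) : ℂ) := by
  rw [twistedLapl_eq_mul]
  -- For a single vertex without edges both sides are `0`; there is then no enumeration `g`.
  rcases isEmpty_or_nonempty X.Edge with hE | hE
  · have hV : 0 < Fintype.card X.V := Fintype.card_pos_iff.2 hX.1
    have hB : X.twistedInc o η ρ * (X.twistedInc o η ρ).conjTranspose = 0 := by
      ext u v
      rw [Matrix.mul_apply, Finset.univ_eq_empty, Finset.sum_empty, Matrix.zero_apply]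
    have := hX.1
    rw [hB, Matrix.det_zero]
    symm
    refine Finset.sum_eq_zero fun F hF => ?_
    have := ((Set.Finite.mem_toFinset _).1 hF).1
    rw [Fintype.card_eq_zero (α := X.Edge)] at this
    omega
  obtain ⟨g, hg⟩ := X.exists_enumeration hE
  rw [det_mul_eq_sum_powersetCard _ _ g fun S hS => (hg S hS).1]
  have hcompl : ∀ S : Finset X.Edge, S.card = Fintype.card X.V →
      Sᶜ.card + Fintype.card X.V = Fintype.card X.Edge := fun S hS => by
    rw [← hS, Finset.card_compl_add_card]
  have hterm : ∀ S : Finset X.Edge,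
      ((X.twistedInc o η ρ).submatrix id (g S)).det *
        ((X.twistedInc o η ρ).conjTranspose.submatrix (g S) id).det =
      ((‖((X.twistedInc o η ρ).submatrix id (g S)).det‖ ^ 2 : ℝ) : ℂ) := by
    intro S
    have : (X.twistedInc o η ρ).conjTranspose.submatrix (g S) id =
        ((X.twistedInc o η ρ).submatrix id (g S)).conjTranspose := rfl
    rw [this, Matrix.det_conjTranspose, ← starRingEnd_apply, Complex.mul_conj', Complex.ofReal_pow]
  simp only [hterm]
  symm
  -- The nonzero terms on both sides correspond to each other under `S = Fᶜ`.
  refine Finset.sum_bij_ne_zero (fun F _ _ => Fᶜ) ?_ ?_ ?_ ?_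
  · intro F hF _
    have := ((Set.Finite.mem_toFinset _).1 hF).1
    refine Finset.mem_powersetCard.2 ⟨Finset.subset_univ _, ?_⟩
    rw [Finset.card_compl]
    omega
  · intro F _ _ F' _ _ h
    exact compl_injective h
  · intro S hS hne
    have hcard := (Finset.mem_powersetCard.1 hS).2
    obtain ⟨⟨hinj, himg⟩, _⟩ := hg S hcard
    have hgen : ∀ C ∈ X.components Sᶜ, (X.edgesIn Sᶜ C).card = C.card := by
      by_cases hm : ∃ m, X.IsMatching Sᶜ m
      · obtain ⟨m, hm⟩ := hm
        exact fun C hC => hm.card_edgesIn (hcompl S hcard) hC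
      · refine absurd ?_ hne
        rw [det_twistedInc_eq_zero o η ρ hm (g S) hinj fun v => ?_]
        · simp
        · rw [Finset.mem_compl, not_not]
          exact himg.subset (Finset.mem_image_of_mem _ (Finset.mem_univ v))
    obtain ⟨m, hm, hgm⟩ := (hg S hcard).2 (X.exists_isMatching Sᶜ hgen)
    refine ⟨Sᶜ, (Set.Finite.mem_toFinset _).2 ⟨hcompl S hcard, hgen⟩, ?_, compl_compl S⟩
    rwa [hgm, hm.norm_det_twistedInc hX.1 o η ρ (hcompl S hcard), Complex.ofReal_prod] at hne
  · intro F hF _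
    obtain ⟨hcard, hgen⟩ := (Set.Finite.mem_toFinset _).1 hF
    have hc : Fᶜ.card = Fintype.card X.V := by
      rw [Finset.card_compl]
      omega
    obtain ⟨m, hm, hgm⟩ := (hg Fᶜ hc).2 (by rw [compl_compl]; exact X.exists_isMatching F hgen)
    rw [compl_compl] at hm
    rw [hgm, hm.norm_det_twistedInc hX.1 o η ρ hcard, Complex.ofReal_prod]
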